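/- arXiv:1110.5110 — 2 statements merged into one kernel-verified Lean document; each statement's English description precedes it below -/
import Mathlib

section
/- Let L be the even lattice U² ⊕ D₆ (of signature (2,8)), and let l ∈ L be a vector with (l,l) = −4 and l/2 ∈ L^∨. Then the orthogonal complement L' = l^⊥ ∩ L is isometric to U² ⊕ D₅, every isometry of L' extends to an isometry of L, and any two such vectors l are equivalent under the orthogonal group O(L). -/
/-!
# The orthogonal complement of a (−4)-vector in `U² ⊕ D₆` (Ma, Lemma A.4)

Let `L` be the even lattice `U² ⊕ D₆` (of signature `(2,8)`), and let `l ∈ L`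
be a vector with `(l,l) = −4` and `l/2 ∈ L^∨`.  Then the orthogonal complement
`L' = l^⊥ ∩ L` is isometric to `U² ⊕ D₅`, every isometry of `L'` extends to an
isometry of `L`, and any two such vectors `l` are equivalent under the
orthogonal group `O(L)`.

Modelling conventions:

* Lattices are `ℤⁿ` with the bilinear form `⟪x, y⟫ = x ⬝ᵥ (G *ᵥ y)` for an
  explicit Gram matrix `G`; `U` is the hyperbolic plane and `D_n` the negative
  definite root lattice `{x ∈ ℤⁿ : Σxᵢ even}` with form `−Σxᵢ²`, presented by
  its root basis.
* `l/2 ∈ L^∨` means `⟪l, y⟫ ∈ 2ℤ` for all `y ∈ L`.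
* An isometry of `L'` extending to `L` means: a form-preserving `ℤ`-linear
  automorphism of `ℤ¹⁰` restricting to the given one on `L' = l^⊥`.
-/

noncomputable section

open Matrix

/-- The bilinear form of the lattice with Gram matrix `G`. -/
def inn {m : ℕ} (G : Matrix (Fin m) (Fin m) ℤ) (x y : Fin m → ℤ) : ℤ :=
  x ⬝ᵥ G.mulVec y

/-- The Gram matrix of `L = U ⊕ U ⊕ D₆` (signature `(2,8)`): coordinates
`0,1` and `2,3` are the two hyperbolic planes; coordinates `4,…,9` carry the
root basis of the negative definite `D₆`-lattice. -/
def LGram : Matrix (Fin 10) (Fin 10) ℤ :=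
  !![0, 1, 0, 0,  0,  0,  0,  0,  0,  0;
     1, 0, 0, 0,  0,  0,  0,  0,  0,  0;
     0, 0, 0, 1,  0,  0,  0,  0,  0,  0;
     0, 0, 1, 0,  0,  0,  0,  0,  0,  0;
     0, 0, 0, 0, -2,  0,  1,  0,  0,  0;
     0, 0, 0, 0,  0, -2,  1,  0,  0,  0;
     0, 0, 0, 0,  1,  1, -2,  1,  0,  0;
     0, 0, 0, 0,  0,  0,  1, -2,  1,  0;
     0, 0, 0, 0,  0,  0,  0,  1, -2,  1;
     0, 0, 0, 0,  0,  0,  0,  0,  1, -2]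

/-- The Gram matrix of `M = U ⊕ U ⊕ D₅`. -/
def MGram : Matrix (Fin 9) (Fin 9) ℤ :=
  !![0, 1, 0, 0,  0,  0,  0,  0,  0;
     1, 0, 0, 0,  0,  0,  0,  0,  0;
     0, 0, 0, 1,  0,  0,  0,  0,  0;
     0, 0, 1, 0,  0,  0,  0,  0,  0;
     0, 0, 0, 0, -2,  0,  1,  0,  0;
     0, 0, 0, 0,  0, -2,  1,  0,  0;
     0, 0, 0, 0,  1,  1, -2,  1,  0;
     0, 0, 0, 0,  0,  0,  1, -2,  1;
     0, 0, 0, 0,  0,  0,  0,  1, -2]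

/-- The orthogonal complement `L' = l^⊥ ∩ L` of a vector `l ∈ L`. -/
def perp (l : Fin 10 → ℤ) : Submodule ℤ (Fin 10 → ℤ) where
  carrier := {x | inn LGram l x = 0}
  add_mem' := by
    intro a b ha hb
    simp only [Set.mem_setOf_eq, inn] at *
    rw [Matrix.mulVec_add, dotProduct_add, ha, hb, add_zero]
  zero_mem' := by
    simp [inn]
  smul_mem' := by
    intro c x hx
    simp only [Set.mem_setOf_eq, inn] at *
    rw [Matrix.mulVec_smul, dotProduct_smul, hx, smul_zero]


section helpers

variable {m : ℕ} (G : Matrix (Fin m) (Fin m) ℤ)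

theorem inn_add_l (x y z : Fin m → ℤ) : inn G (x + y) z = inn G x z + inn G y z := by
  simp [inn, add_dotProduct]
theorem inn_add_r (x y z : Fin m → ℤ) : inn G x (y + z) = inn G x y + inn G x z := by
  simp [inn, mulVec_add, dotProduct_add]
theorem inn_smul_l (c : ℤ) (x z : Fin m → ℤ) : inn G (c • x) z = c * inn G x z := by
  rw [inn, smul_dotProduct, smul_eq_mul, inn]
theorem inn_smul_r (c : ℤ) (x z : Fin m → ℤ) : inn G x (c • z) = c * inn G x z := by
  rw [inn, mulVec_smul, dotProduct_smul, smul_eq_mul, inn]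
theorem inn_sub_l (x y z : Fin m → ℤ) : inn G (x - y) z = inn G x z - inn G y z := by
  simp [inn, sub_dotProduct]
theorem inn_sub_r (x y z : Fin m → ℤ) : inn G x (y - z) = inn G x y - inn G x z := by
  simp [inn, mulVec_sub, dotProduct_sub]

end helpers

theorem inn_L (x y : Fin 10 → ℤ) : inn LGram x y =
    x 0 * y 1 + x 1 * y 0 + x 2 * y 3 + x 3 * y 2
    + x 4 * (-2 * y 4 + y 6) + x 5 * (-2 * y 5 + y 6)
    + x 6 * (y 4 + y 5 - 2 * y 6 + y 7) + x 7 * (y 6 - 2 * y 7 + y 8)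
    + x 8 * (y 7 - 2 * y 8 + y 9) + x 9 * (y 8 - 2 * y 9) := by
  simp [inn, LGram, dotProduct, mulVec, Fin.sum_univ_succ]
  ring

theorem inn_M (x y : Fin 9 → ℤ) : inn MGram x y =
    x 0 * y 1 + x 1 * y 0 + x 2 * y 3 + x 3 * y 2
    + x 4 * (-2 * y 4 + y 6) + x 5 * (-2 * y 5 + y 6)
    + x 6 * (y 4 + y 5 - 2 * y 6 + y 7) + x 7 * (y 6 - 2 * y 7 + y 8)
    + x 8 * (y 7 - 2 * y 8) := by
  simp [inn, MGram, dotProduct, mulVec, Fin.sum_univ_succ]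
  ring

theorem inn_L_symm (x y : Fin 10 → ℤ) : inn LGram x y = inn LGram y x := by
  rw [inn_L, inn_L]; ring
theorem inn_M_symm (x y : Fin 9 → ℤ) : inn MGram x y = inn MGram y x := by
  rw [inn_M, inn_M]; ring

def Rl (x y : Fin 10 → ℤ) : Prop := ∃ F : (Fin 10 → ℤ) ≃ₗ[ℤ] (Fin 10 → ℤ),
  (∀ x y : Fin 10 → ℤ, inn LGram (F x) (F y) = inn LGram x y) ∧ F x = y

theorem Rl.refl (x : Fin 10 → ℤ) : Rl x x := ⟨LinearEquiv.refl ℤ _, by simp, rfl⟩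
theorem Rl.symm {x y : Fin 10 → ℤ} (h : Rl x y) : Rl y x := by
  obtain ⟨F, hF, rfl⟩ := h
  exact ⟨F.symm, fun x y => by rw [← hF]; simp, by simp⟩
theorem Rl.trans {x y z : Fin 10 → ℤ} (h : Rl x y) (h' : Rl y z) : Rl x z := by
  obtain ⟨F, hF, rfl⟩ := h
  obtain ⟨F', hF', rfl⟩ := h'
  exact ⟨F.trans F', fun x y => by simp [hF, hF'], by simp⟩
theorem Rl.inn {x y : Fin 10 → ℤ} (h : Rl x y) : inn LGram y y = inn LGram x x := by
  obtain ⟨F, hF, rfl⟩ := h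
  exact hF _ _
theorem Rl.even {x y : Fin 10 → ℤ} (h : Rl x y) (hx : ∀ z, 2 ∣ _root_.inn LGram x z) (z) :
    2 ∣ _root_.inn LGram y z := by
  obtain ⟨F, hF, rfl⟩ := h
  have := hx (F.symm z)
  rwa [← hF, F.apply_symm_apply] at this

theorem Rl.neg (x : Fin 10 → ℤ) : Rl x (-x) :=
  ⟨LinearEquiv.neg ℤ, fun x y => by rw [inn_L, inn_L]; simp; ring, by simp⟩

theorem Rl.perm (x : Fin 10 → ℤ) (s : Equiv.Perm (Fin 10))
    (hs : ∀ x y : Fin 10 → ℤ, _root_.inn LGram (x ∘ s) (y ∘ s) = _root_.inn LGram x y) :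
    Rl x (x ∘ s) :=
  ⟨LinearEquiv.funCongrLeft ℤ ℤ s, fun x y => hs x y, rfl⟩

def eichF (e a : Fin 10 → ℤ) (h : ℤ) (v : Fin 10 → ℤ) : Fin 10 → ℤ :=
  v - (inn LGram a v) • e + (inn LGram e v) • a - (h * inn LGram e v) • e

theorem eich_inv (e a : Fin 10 → ℤ) (h : ℤ) (he : inn LGram e e = 0) (hea : inn LGram e a = 0)
    (ha : inn LGram a a = 2 * h) (v) : eichF e (-a) h (eichF e a h v) = v := by
  have hae : inn LGram a e = 0 := by rw [inn_L_symm, hea]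
  have h1 : inn LGram e (eichF e a h v) = inn LGram e v := by
    simp only [eichF, inn_add_r, inn_sub_r, inn_smul_r, he, hea]; ring
  have h2 : inn LGram a (eichF e a h v) = inn LGram a v + 2 * h * inn LGram e v := by
    simp only [eichF, inn_add_r, inn_sub_r, inn_smul_r, ha, hae]; ring
  have h3 : inn LGram (-a) (eichF e a h v) = -(inn LGram a v + 2 * h * inn LGram e v) := by
    rw [← h2, show -a = (-1 : ℤ) • a by simp, inn_smul_l]; ring
  rw [eichF, h1, h3]
  ext i
  simp [eichF]
  ring

theorem Rl.eich (e a : Fin 10 → ℤ) (h : ℤ) (he : _root_.inn LGram e e = 0)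
    (hea : _root_.inn LGram e a = 0)
    (ha : _root_.inn LGram a a = 2 * h) (v) : Rl v (eichF e a h v) := by
  have hae : _root_.inn LGram a e = 0 := by rw [inn_L_symm, hea]
  refine ⟨⟨⟨⟨eichF e a h, ?_⟩, ?_⟩, eichF e (-a) h, ?_, ?_⟩, ?_, rfl⟩
  · intro x y
    ext i
    simp [eichF, inn_add_r]
    ring
  · intro c x
    ext i
    simp only [eichF, inn_smul_r, Pi.add_apply, Pi.sub_apply, Pi.smul_apply, smul_eq_mul,
      RingHom.id_apply]
    ring
  · exact eich_inv e a h he hea ha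
  · intro v
    have := eich_inv e (-a) h he
      (by rw [show -a = (-1 : ℤ) • a by simp, inn_smul_r, hea]; rfl)
      (by rw [show -a = (-1 : ℤ) • a by simp, inn_smul_r, inn_smul_l, ha]; ring) v
    simpa using this
  · intro x y
    change _root_.inn LGram (eichF e a h x) (eichF e a h y) = _
    simp only [eichF, inn_add_r, inn_sub_r, inn_smul_r, inn_add_l, inn_sub_l, inn_smul_l,
      ha, hae, hea, he, inn_L_symm x e, inn_L_symm x a]
    ring

def l0 : Fin 10 → ℤ := ![0, 0, 0, 0, 1, 1, 2, 2, 2, 2]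

/-- transvection along the first isotropic vector -/
theorem step0 (v : Fin 10 → ℤ) (a : Fin 10 → ℤ) (h0 : a 0 = 0) (h1 : a 1 = 0) :
    ∃ w, Rl v w ∧ ∀ i, i ≠ 0 → w i = v i + v 1 * a i := by
  have hev : ∃ h, inn LGram a a = 2 * h := ⟨a 0 * a 1 + a 2 * a 3 - a 4 * a 4 - a 5 * a 5 - a 6 * a 6
    - a 7 * a 7 - a 8 * a 8 - a 9 * a 9 + a 6 * (a 4 + a 5 + a 7) + a 7 * a 8 + a 8 * a 9, by
      rw [inn_L]; ring⟩
  obtain ⟨h, hh⟩ := hev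
  refine ⟨_, Rl.eich (Pi.single 0 1) a h (by simp [inn_L]) (by simp [inn_L, h1]) hh v, ?_⟩
  intro i hi
  have : inn LGram (Pi.single 0 1) v = v 1 := by simp [inn_L]
  simp [eichF, this, hi]

theorem step2 (v : Fin 10 → ℤ) (a : Fin 10 → ℤ) (h2 : a 2 = 0) (h3 : a 3 = 0) (hv : v 3 = 0) :
    ∃ w, Rl v w ∧ w 2 = v 2 - inn LGram a v ∧ ∀ i, i ≠ 2 → w i = v i := by
  have hev : ∃ h, inn LGram a a = 2 * h := ⟨a 0 * a 1 + a 2 * a 3 - a 4 * a 4 - a 5 * a 5 - a 6 * a 6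
    - a 7 * a 7 - a 8 * a 8 - a 9 * a 9 + a 6 * (a 4 + a 5 + a 7) + a 7 * a 8 + a 8 * a 9, by
      rw [inn_L]; ring⟩
  obtain ⟨h, hh⟩ := hev
  have : inn LGram (Pi.single 2 1) v = 0 := by simp [inn_L, hv]
  refine ⟨_, Rl.eich (Pi.single 2 1) a h (by simp [inn_L]) (by simp [inn_L, h3]) hh v, ?_, ?_⟩
  · simp [eichF, this]
  · intro i hi
    simp [eichF, this, hi]

theorem step3 (v : Fin 10 → ℤ) (k : ℤ) :
    ∃ w, Rl v w ∧ w 0 = v 0 + k * v 2 := by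
  have : inn LGram (Pi.single 3 1) v = v 2 := by simp [inn_L]
  refine ⟨_, Rl.eich (Pi.single 3 1) (Pi.single 0 k) 0 (by simp [inn_L]) (by simp [inn_L])
    (by simp [inn_L]) v, ?_⟩
  simp [eichF, this, mul_comm]

theorem swap01 (v : Fin 10 → ℤ) : ∃ w, Rl v w ∧ w 1 = v 0 ∧ w 0 = v 1 ∧ w 2 = v 2 ∧ w 3 = v 3 := by
  refine ⟨_, Rl.perm v (Equiv.swap 0 1) ?_, ?_⟩
  · intro x y
    rw [inn_L, inn_L]
    simp [Equiv.swap_apply_def]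
    ring
  · simp [Equiv.swap_apply_def]

theorem swapU (v : Fin 10 → ℤ) : ∃ w, Rl v w ∧ w 1 = v 3 ∧ w 0 = v 2 := by
  refine ⟨_, Rl.perm v (Equiv.swap 0 2 * Equiv.swap 1 3) ?_, ?_⟩
  · intro x y
    rw [inn_L, inn_L]
    simp [Equiv.swap_apply_def]
    ring
  · simp [Equiv.swap_apply_def]

theorem exists_nz (v : Fin 10 → ℤ) (hv : inn LGram v v = -4) : ∃ w, Rl v w ∧ w 1 ≠ 0 := by
  by_contra! H
  have H0 : ∀ w, Rl v w → w 0 = 0 := by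
    intro w hw
    obtain ⟨w', h1, h2, -⟩ := swap01 w
    rw [← h2]; exact H _ (hw.trans h1)
  have H3 : ∀ w, Rl v w → w 3 = 0 := by
    intro w hw
    obtain ⟨w', h1, h2, -⟩ := swapU w
    rw [← h2]; exact H _ (hw.trans h1)
  have H2 : ∀ w, Rl v w → w 2 = 0 := by
    intro w hw
    obtain ⟨w', h1, -, h2⟩ := swapU w
    rw [← h2]; exact H0 _ (hw.trans h1)
  have h0 := H0 v (Rl.refl v)
  have h1 := H v (Rl.refl v)
  have h2 := H2 v (Rl.refl v)
  have h3 := H3 v (Rl.refl v)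
  have key : ∀ a : Fin 10 → ℤ, a 2 = 0 → a 3 = 0 → inn LGram a v = 0 := by
    intro a ha2 ha3
    obtain ⟨w, hw, hw2, -⟩ := step2 v a ha2 ha3 h3
    have := H2 w hw
    omega
  have := key v h2 h3
  omega

theorem exists_min (v : Fin 10 → ℤ) (hv : inn LGram v v = -4) : ∃ w, Rl v w ∧ w 1 ≠ 0 ∧
    ∀ u, Rl w u → u 1 ≠ 0 → (w 1).natAbs ≤ (u 1).natAbs := by
  classical
  have hex : ∃ n : ℕ, ∃ w, Rl v w ∧ w 1 ≠ 0 ∧ (w 1).natAbs = n := by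
    obtain ⟨w, h, h'⟩ := exists_nz v hv
    exact ⟨_, w, h, h', rfl⟩
  obtain ⟨w, h, h', h''⟩ := Nat.find_spec hex
  refine ⟨w, h, h', fun u hu hu' => ?_⟩
  rw [h'']
  exact Nat.find_min' hex ⟨u, h.trans hu, hu', rfl⟩

theorem natAbs_emod_lt (a d : ℤ) (hd : d ≠ 0) : (a % d).natAbs < d.natAbs := by
  have h1 := Int.emod_nonneg a hd
  have h2 := Int.emod_lt_abs a hd
  rw [Int.abs_eq_natAbs] at h2
  omega

theorem exists_div (v : Fin 10 → ℤ) (hv : inn LGram v v = -4) : ∃ w, Rl v w ∧ w 1 ≠ 0 ∧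
    w 2 = 0 ∧ w 3 = 0 ∧ ∀ a, w 1 ∣ inn LGram a w := by
  obtain ⟨u, hu, hu1, H⟩ := exists_min v hv
  set d := u 1 with hd
  have H0 : ∀ w, Rl u w → w 0 ≠ 0 → d.natAbs ≤ (w 0).natAbs := by
    intro w hw
    obtain ⟨w', h1, h2, -⟩ := swap01 w
    rw [← h2]; exact H _ (hw.trans h1)
  have H3 : ∀ w, Rl u w → w 3 ≠ 0 → d.natAbs ≤ (w 3).natAbs := by
    intro w hw
    obtain ⟨w', h1, h2, -⟩ := swapU w
    rw [← h2]; exact H _ (hw.trans h1)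
  have H2 : ∀ w, Rl u w → w 2 ≠ 0 → d.natAbs ≤ (w 2).natAbs := by
    intro w hw
    obtain ⟨w', h1, -, h2⟩ := swapU w
    rw [← h2]; exact H0 _ (hw.trans h1)
  have D2 : ∀ w, Rl u w → w 1 = d → d ∣ w 2 := by
    intro w hw h1
    obtain ⟨w', hw', h'⟩ := step0 w (Pi.single 2 (-(w 2 / d))) (by simp) (by simp)
    have e := h' 2 (by decide)
    have : w' 2 = w 2 % d := by
      rw [e, h1]; simp [Int.emod_def]; ring
    by_contra hc
    have h5 := H2 w' (hw.trans hw') (by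
      rw [this]; intro h; exact hc (Int.dvd_of_emod_eq_zero h))
    rw [this] at h5
    have := natAbs_emod_lt (w 2) d hu1
    omega
  have D3 : ∀ w, Rl u w → w 1 = d → d ∣ w 3 := by
    intro w hw h1
    obtain ⟨w', hw', h'⟩ := step0 w (Pi.single 3 (-(w 3 / d))) (by simp) (by simp)
    have e := h' 3 (by decide)
    have : w' 3 = w 3 % d := by
      rw [e, h1]; simp [Int.emod_def]; ring
    by_contra hc
    have h5 := H3 w' (hw.trans hw') (by
      rw [this]; intro h; exact hc (Int.dvd_of_emod_eq_zero h))
    rw [this] at h5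
    have := natAbs_emod_lt (w 3) d hu1
    omega
  obtain ⟨c2, hc2⟩ := D2 u (Rl.refl u) rfl
  obtain ⟨c3, hc3⟩ := D3 u (Rl.refl u) rfl
  obtain ⟨w, hw, hwi⟩ := step0 u (Pi.single 2 (-c2) + Pi.single 3 (-c3)) (by simp) (by simp)
  have hw1 : w 1 = d := by rw [hwi 1 (by decide)]; simp [hd]
  have hw2 : w 2 = 0 := by rw [hwi 2 (by decide), hc2]; simp [← hd]
  have hw3 : w 3 = 0 := by rw [hwi 3 (by decide), hc3]; simp [← hd]
  refine ⟨w, hu.trans hw, by rw [hw1]; exact hu1, hw2, hw3, ?_⟩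
  rw [hw1]
  have D0 : d ∣ w 0 := by
    obtain ⟨x, hx, hx2, hxi⟩ := step2 w (Pi.single 0 (-1)) (by simp) (by simp) hw3
    have e2 : x 2 = d := by rw [hx2, hw2, inn_L]; simp [hw1]
    obtain ⟨y, hy, hy0⟩ := step3 x (-(w 0 / d))
    have : y 0 = w 0 % d := by
      rw [hy0, e2, hxi 0 (by decide), Int.emod_def]; ring
    by_contra hc
    have h5 := H0 y (hw.trans (hx.trans hy)) (by
      rw [this]; intro h; exact hc (Int.dvd_of_emod_eq_zero h))
    rw [this] at h5
    have := natAbs_emod_lt (w 0) d hu1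
    omega
  intro a
  obtain ⟨x, hx, hx2, hxi⟩ := step2 w (a - Pi.single 2 (a 2) - Pi.single 3 (a 3))
    (by simp) (by simp) hw3
  have h6 := D2 x (hw.trans hx) (by rw [hxi 1 (by decide), hw1])
  rw [hx2, hw2, zero_sub, dvd_neg, inn_sub_l, inn_sub_l] at h6
  have e1 : inn LGram (Pi.single 2 (a 2)) w = 0 := by rw [inn_L]; simp [hw3]
  have e2 : inn LGram (Pi.single 3 (a 3)) w = 0 := by rw [inn_L]; simp [hw2]
  simpa [e1, e2] using h6

theorem to_l0 (v : Fin 10 → ℤ) (hv : inn LGram v v = -4)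
    (hhalf : ∀ y : Fin 10 → ℤ, 2 ∣ inn LGram v y) : Rl v l0 := by
  obtain ⟨w, hw, hw1, hw2, hw3, hdiv⟩ := exists_div v hv
  have hwn := hw.inn
  rw [hv] at hwn
  have hwe := hw.even hhalf
  -- `w 1 = ± 2`
  have hpm : w 1 = 2 ∨ w 1 = -2 := by
    obtain ⟨t, ht⟩ : 2 ∣ w 1 := by simpa [inn_L] using hwe (Pi.single 0 1)
    obtain ⟨k0, h0⟩ := hdiv (Pi.single 1 1)
    obtain ⟨k4, h4⟩ := hdiv (Pi.single 4 1)
    obtain ⟨k5, h5⟩ := hdiv (Pi.single 5 1)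
    obtain ⟨k6, h6⟩ := hdiv (Pi.single 6 1)
    obtain ⟨k7, h7⟩ := hdiv (Pi.single 7 1)
    obtain ⟨k8, h8⟩ := hdiv (Pi.single 8 1)
    obtain ⟨k9, h9⟩ := hdiv (Pi.single 9 1)
    simp [inn_L] at h0 h4 h5 h6 h7 h8 h9
    have hdd : w 1 * w 1 ∣ 8 := by
      have g4 : -2 * w 4 + w 6 = w 1 * k4 := by linarith
      have g5 : -2 * w 5 + w 6 = w 1 * k5 := by linarith
      have g6 : w 4 + w 5 - 2 * w 6 + w 7 = w 1 * k6 := by linarith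
      have g7 : w 6 - 2 * w 7 + w 8 = w 1 * k7 := by linarith
      have g8 : w 7 - 2 * w 8 + w 9 = w 1 * k8 := by linarith
      have g9 : w 8 - 2 * w 9 = w 1 * k9 := by linarith
      have m4 : 2 * w 4 = -(w 1 * (3 * k4 + 2 * k5 + 4 * k6 + 3 * k7 + 2 * k8 + 1 * k9)) := by linarith
      have m5 : 2 * w 5 = -(w 1 * (2 * k4 + 3 * k5 + 4 * k6 + 3 * k7 + 2 * k8 + 1 * k9)) := by linarith
      have m6 : 2 * w 6 = -(w 1 * (4 * k4 + 4 * k5 + 8 * k6 + 6 * k7 + 4 * k8 + 2 * k9)) := by linarith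
      have m7 : 2 * w 7 = -(w 1 * (3 * k4 + 3 * k5 + 6 * k6 + 6 * k7 + 4 * k8 + 2 * k9)) := by linarith
      have m8 : 2 * w 8 = -(w 1 * (2 * k4 + 2 * k5 + 4 * k6 + 4 * k7 + 4 * k8 + 2 * k9)) := by linarith
      have m9 : 2 * w 9 = -(w 1 * (1 * k4 + 1 * k5 + 2 * k6 + 2 * k7 + 2 * k8 + 2 * k9)) := by linarith
      have hn : 2 * (w 0 * w 1) + w 1 * (w 4 * k4 + w 5 * k5 + w 6 * k6 + w 7 * k7 + w 8 * k8
          + w 9 * k9) = -4 := by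
        rw [inn_L, hw2, hw3] at hwn
        linear_combination hwn - w 4 * g4 - w 5 * g5 - w 6 * g6 - w 7 * g7 - w 8 * g8 - w 9 * g9
      refine ⟨-4 * k0 + (k4 * (3 * k4 + 2 * k5 + 4 * k6 + 3 * k7 + 2 * k8 + 1 * k9) + k5 * (2 * k4 + 3 * k5 + 4 * k6 + 3 * k7 + 2 * k8 + 1 * k9) + k6 * (4 * k4 + 4 * k5 + 8 * k6 + 6 * k7 + 4 * k8 + 2 * k9) + k7 * (3 * k4 + 3 * k5 + 6 * k6 + 6 * k7 + 4 * k8 + 2 * k9) + k8 * (2 * k4 + 2 * k5 + 4 * k6 + 4 * k7 + 4 * k8 + 2 * k9) + k9 * (1 * k4 + 1 * k5 + 2 * k6 + 2 * k7 + 2 * k8 + 2 * k9)), ?_⟩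
      linear_combination 2 * hn - 4 * w 1 * h0 - w 1 * k4 * m4 - w 1 * k5 * m5 - w 1 * k6 * m6 - w 1 * k7 * m7 - w 1 * k8 * m8 - w 1 * k9 * m9
    rw [ht] at hdd
    have h2 : t * t ∣ 2 := by
      obtain ⟨c, hc⟩ := hdd
      exact ⟨c, by linarith⟩
    have h3 : t * t ≤ 2 := Int.le_of_dvd (by norm_num) h2
    have : t ≤ 1 := by nlinarith
    have : -1 ≤ t := by nlinarith
    have : t ≠ 0 := by rintro rfl; simp at ht; exact hw1 ht
    omega
  clear hdiv
  -- normalise the sign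
  obtain ⟨u, hu, hu1, hu2, hu3⟩ : ∃ u, Rl v u ∧ u 1 = 2 ∧ u 2 = 0 ∧ u 3 = 0 := by
    rcases hpm with h | h
    · exact ⟨w, hw, h, hw2, hw3⟩
    · exact ⟨-w, hw.trans (Rl.neg w), by simp [h], by simp [hw2], by simp [hw3]⟩
  have hun := hu.inn
  rw [hv] at hun
  have hue := hu.even hhalf
  obtain ⟨k0, h0⟩ := hue (Pi.single 1 1)
  obtain ⟨k4, h4⟩ := hue (Pi.single 4 1)
  obtain ⟨k5, h5⟩ := hue (Pi.single 5 1)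
  obtain ⟨k6, h6⟩ := hue (Pi.single 6 1)
  obtain ⟨k7, h7⟩ := hue (Pi.single 7 1)
  obtain ⟨k8, h8⟩ := hue (Pi.single 8 1)
  obtain ⟨k9, h9⟩ := hue (Pi.single 9 1)
  simp [inn_L] at h0 h4 h5 h6 h7 h8 h9
  have hpar : u 4 % 2 = 1 ∧ u 5 % 2 = 1 := by
    rw [inn_L, hu1, hu2, hu3] at hun
    obtain ⟨b6, q6⟩ : 2 ∣ u 6 := by omega
    obtain ⟨b8, q8⟩ : 2 ∣ u 8 := by omega
    rcases Int.even_or_odd' (u 4) with ⟨b4, q4 | q4⟩ <;>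
    rcases Int.even_or_odd' (u 5) with ⟨b5, q5 | q5⟩ <;>
    rcases Int.even_or_odd' (u 7) with ⟨b7, q7 | q7⟩ <;>
    rcases Int.even_or_odd' (u 9) with ⟨b9, q9 | q9⟩ <;>
    first
    | omega
    | (exfalso
       rw [h0, q4, q5, q6, q7, q8, q9] at hun
       ring_nf at hun
       omega)
  obtain ⟨a4, e4⟩ : 2 ∣ u 4 - 1 := by omega
  obtain ⟨a5, e5⟩ : 2 ∣ u 5 - 1 := by omega
  obtain ⟨a6, e6⟩ : 2 ∣ u 6 - 2 := by omega
  obtain ⟨a7, e7⟩ : 2 ∣ u 7 - 2 := by omega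
  obtain ⟨a8, e8⟩ : 2 ∣ u 8 - 2 := by omega
  obtain ⟨a9, e9⟩ : 2 ∣ u 9 - 2 := by omega
  obtain ⟨x, hx, hxi⟩ := step0 u ![0, 0, 0, 0, -a4, -a5, -a6, -a7, -a8, -a9] rfl rfl
  rw [hu1] at hxi
  have x1 : x 1 = 2 := by rw [hxi 1 (by decide), hu1]; simp
  have x2 : x 2 = 0 := by rw [hxi 2 (by decide), hu2]; simp
  have x3 : x 3 = 0 := by rw [hxi 3 (by decide), hu3]; simp
  have x4 : x 4 = 1 := by rw [hxi 4 (by decide)]; simp; linarith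
  have x5 : x 5 = 1 := by rw [hxi 5 (by decide)]; simp; linarith
  have x6 : x 6 = 2 := by rw [hxi 6 (by decide)]; simp; linarith
  have x7 : x 7 = 2 := by rw [hxi 7 (by decide)]; simp; linarith
  have x8 : x 8 = 2 := by rw [hxi 8 (by decide)]; simp; linarith
  have x9 : x 9 = 2 := by rw [hxi 9 (by decide)]; simp; linarith
  have hxn := hx.inn
  rw [hun, inn_L, x1, x2, x3, x4, x5, x6, x7, x8, x9] at hxn
  have x0 : x 0 = 0 := by linarith
  refine hu.trans (hx.trans ?_)
  have h7 := Rl.eich (Pi.single 1 1) (Pi.single 9 (-1)) (-1) (by simp [inn_L]) (by simp [inn_L])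
    (by simp [inn_L]) x
  have i1 : inn LGram (Pi.single 1 1) x = 0 := by simp [inn_L, x0]
  have i2 : inn LGram (Pi.single 9 (-1)) x = 2 := by simp [inn_L, x8, x9]
  rw [eichF, i1, i2] at h7
  convert h7 using 1
  ext i
  fin_cases i <;> simp [l0, x0, x1, x2, x3, x4, x5, x6, x7, x8, x9]

def z0 : Fin 9 → ℤ := ![0, 0, 0, 0, 1, 1, 2, 2, 2]

theorem inn_z0 (w : Fin 9 → ℤ) : inn MGram z0 w = -2 * w 8 := by
  simp [inn_M, z0]; ring

def ini (x : Fin 10 → ℤ) : Fin 9 → ℤ := fun i => x i.castSucc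
def ext0 (x : Fin 9 → ℤ) (c : ℤ) : Fin 10 → ℤ := Fin.snoc (α := fun _ => ℤ) x c

theorem ini_ext (x : Fin 9 → ℤ) (c : ℤ) : ini (ext0 x c) = x := by
  ext i; simp [ini, ext0]
theorem ext_last (x : Fin 9 → ℤ) (c : ℤ) : ext0 x c 9 = c := by
  exact Fin.snoc_last (α := fun _ => ℤ) c x
theorem ext_ini (x : Fin 10 → ℤ) : ext0 (ini x) (x 9) = x := by
  exact Fin.snoc_init_self (α := fun _ => ℤ) x

theorem inn_LM (x y : Fin 10 → ℤ) : inn LGram x y = inn MGram (ini x) (ini y)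
    + x 9 * ini y 8 + ini x 8 * y 9 - 2 * (x 9 * y 9) := by
  rw [inn_L, inn_M]
  simp only [ini]
  simp [Fin.castSucc, Fin.castAdd, Fin.castLE]
  ring

theorem inn_l0 (y : Fin 10 → ℤ) : inn LGram l0 y = -2 * y 9 := by
  simp [inn_L, l0]; ring

theorem ext_iso (g : (Fin 9 → ℤ) ≃ₗ[ℤ] (Fin 9 → ℤ))
    (hg : ∀ x y, inn MGram (g x) (g y) = inn MGram x y) :
    ∃ F : (Fin 10 → ℤ) ≃ₗ[ℤ] (Fin 10 → ℤ),
        (∀ x y : Fin 10 → ℤ, inn LGram (F x) (F y) = inn LGram x y) ∧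
        ∀ x : Fin 10 → ℤ, x 9 = 0 → F x = ext0 (g (ini x)) 0 := by
  obtain ⟨y, hy⟩ : ∃ y, g z0 = z0 + (2 : ℤ) • y := by
    have hev : ∀ w, 2 ∣ inn MGram (g z0) w := by
      intro w
      rw [← g.apply_symm_apply w, hg, inn_z0]
      exact ⟨-(g.symm w 8), by ring⟩
    obtain ⟨k0, h0⟩ := hev (Pi.single 1 1)
    obtain ⟨k1, h1⟩ := hev (Pi.single 0 1)
    obtain ⟨k2, h2⟩ := hev (Pi.single 3 1)
    obtain ⟨k3, h3⟩ := hev (Pi.single 2 1)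
    obtain ⟨k4, h4⟩ := hev (Pi.single 4 1)
    obtain ⟨k5, h5⟩ := hev (Pi.single 5 1)
    obtain ⟨k6, h6⟩ := hev (Pi.single 6 1)
    obtain ⟨k7, h7⟩ := hev (Pi.single 7 1)
    obtain ⟨k8, h8⟩ := hev (Pi.single 8 1)
    simp [inn_M] at h0 h1 h2 h3 h4 h5 h6 h7 h8
    have hodd : ¬ (2 ∣ g z0 4) := by
      intro hc
      have : ∃ u : Fin 9 → ℤ, g z0 = (2 : ℤ) • u := by
        refine ⟨fun i => g z0 i / 2, ?_⟩
        ext i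
        fin_cases i <;> simp only [Pi.smul_apply, smul_eq_mul, Fin.reduceFinMk, Fin.zero_eta, Fin.mk_one, Fin.isValue] <;> omega
      obtain ⟨u, hu⟩ := this
      have h := congrArg g.symm hu
      rw [g.symm_apply_apply, map_smul] at h
      have := congrFun h 4
      simp [z0] at this
      omega
    have zz0 : z0 0 = 0 := rfl
    have zz1 : z0 1 = 0 := rfl
    have zz2 : z0 2 = 0 := rfl
    have zz3 : z0 3 = 0 := rfl
    have zz4 : z0 4 = 1 := rfl
    have zz5 : z0 5 = 1 := rfl
    have zz6 : z0 6 = 2 := rfl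
    have zz7 : z0 7 = 2 := rfl
    have zz8 : z0 8 = 2 := rfl
    refine ⟨fun i => (g z0 i - z0 i) / 2, ?_⟩
    ext i
    fin_cases i <;> simp only [Pi.add_apply, Pi.smul_apply, smul_eq_mul, Fin.reduceFinMk, Fin.zero_eta, Fin.mk_one, Fin.isValue] <;> omega
  refine ⟨⟨⟨⟨fun x => ext0 (g (ini x) - x 9 • y) (x 9), ?_⟩, ?_⟩,
    fun x => ext0 (g.symm (ini x + x 9 • y)) (x 9), ?_, ?_⟩, ?_, ?_⟩
  · intro a b
    have e : ini (a + b) = ini a + ini b := rfl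
    rw [← ext_ini (ext0 _ _ + ext0 _ _)]
    congr 1
    · change _ = ini (ext0 _ _) + ini (ext0 _ _)
      rw [ini_ext, ini_ext, e, map_add, Pi.add_apply, add_smul]
      abel
  · intro c a
    have e : ini (c • a) = c • ini a := rfl
    change ext0 (g (ini (c • a)) - (c • a) 9 • y) ((c • a) 9) = c • ext0 (g (ini a) - a 9 • y) (a 9)
    rw [← ext_ini (c • ext0 _ _)]
    congr 1
    · change _ = c • ini (ext0 _ _)
      rw [ini_ext, e, map_smul, Pi.smul_apply, smul_sub, smul_assoc]
  · intro x
    simp [ini_ext, ext_last, ext_ini]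
  · intro x
    simp [ini_ext, ext_last, ext_ini]
  · intro a b
    change inn LGram (ext0 (g (ini a) - a 9 • y) (a 9)) (ext0 (g (ini b) - b 9 • y) (b 9)) = _
    rw [inn_LM, inn_LM, ini_ext, ini_ext, ext_last, ext_last]
    simp only [inn_sub_l, inn_sub_r, inn_smul_l, inn_smul_r, hg, Pi.sub_apply, Pi.smul_apply,
      smul_eq_mul]
    have A : ∀ x, 2 * inn MGram y (g x) = inn MGram z0 x - inn MGram z0 (g x) := by
      intro x
      rw [← hg z0 x, hy, inn_add_l, inn_smul_l]; ring
    have Aa := A (ini a)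
    have Ab := A (ini b)
    have C : 2 * inn MGram y y = - inn MGram z0 y - inn MGram y z0 := by
      have := hg z0 z0
      rw [hy, inn_add_l, inn_add_r, inn_add_r, inn_smul_l, inn_smul_l, inn_smul_r, inn_smul_r] at this
      linarith
    rw [inn_M_symm y z0] at C
    rw [inn_z0] at *
    rw [inn_M_symm (g (ini a)) y]
    rw [inn_z0] at Aa Ab
    have Aa' : inn MGram y (g (ini a)) = g (ini a) 8 - ini a 8 := by linarith
    have Ab' : inn MGram y (g (ini b)) = g (ini b) 8 - ini b 8 := by linarith
    have C' : inn MGram y y = 2 * y 8 := by linarith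
    rw [Aa', Ab', C']
    ring
  · intro x hx
    change ext0 (g (ini x) - x 9 • y) (x 9) = _
    rw [hx]; simp

/-- **Ma, Lemma A.4.**  For `l ∈ L = U² ⊕ D₆` with `(l,l) = −4` and
`l/2 ∈ L^∨`: the orthogonal complement `l^⊥ ∩ L` is isometric to `U² ⊕ D₅`;
every isometry of `l^⊥ ∩ L` extends to an isometry of `L`; and all such
vectors `l` are `O(L)`-equivalent. -/
theorem orthogonal_complement_of_minus_four_vector
    (l : Fin 10 → ℤ) (hl : inn LGram l l = -4)
    (hhalf : ∀ y : Fin 10 → ℤ, 2 ∣ inn LGram l y) :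
    -- `L' = l^⊥ ∩ L` is isometric to `U² ⊕ D₅` …
    (∃ e : ↥(perp l) ≃ₗ[ℤ] (Fin 9 → ℤ),
      ∀ x y : ↥(perp l), inn MGram (e x) (e y) = inn LGram x y) ∧
    -- … every isometry of `L'` extends to an isometry of `L` …
    (∀ f : ↥(perp l) ≃ₗ[ℤ] ↥(perp l),
      (∀ x y : ↥(perp l),
        inn LGram ((f x : Fin 10 → ℤ)) ((f y : Fin 10 → ℤ)) = inn LGram x y) →
      ∃ F : (Fin 10 → ℤ) ≃ₗ[ℤ] (Fin 10 → ℤ),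
        (∀ x y : Fin 10 → ℤ, inn LGram (F x) (F y) = inn LGram x y) ∧
        ∀ x : ↥(perp l), F (x : Fin 10 → ℤ) = (f x : Fin 10 → ℤ)) ∧
    -- … and all such vectors `l` are `O(L)`-equivalent
    (∀ l' : Fin 10 → ℤ, inn LGram l' l' = -4 →
      (∀ y : Fin 10 → ℤ, 2 ∣ inn LGram l' y) →
      ∃ F : (Fin 10 → ℤ) ≃ₗ[ℤ] (Fin 10 → ℤ),
        (∀ x y : Fin 10 → ℤ, inn LGram (F x) (F y) = inn LGram x y) ∧
        F l = l') := by
  obtain ⟨F, hF, hFl⟩ := to_l0 l hl hhalf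
  have hmem : ∀ x, x ∈ perp l ↔ F x 9 = 0 := by
    intro x
    change inn LGram l x = 0 ↔ _
    rw [← hF, hFl, inn_l0]
    omega
  have hE : ∃ e : ↥(perp l) ≃ₗ[ℤ] (Fin 9 → ℤ), (∀ x, e x = ini (F x)) := by
    refine ⟨⟨⟨⟨fun x => ini (F x), ?_⟩, ?_⟩, fun z => ⟨F.symm (ext0 z 0), ?_⟩, ?_, ?_⟩, ?_⟩
    · intro x y
      ext i
      simp [ini]
    · intro c x
      change ini (F (c • (x : Fin 10 → ℤ))) = c • ini (F x)
      rw [map_smul]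
      rfl
    · rw [hmem, F.apply_symm_apply, ext_last]
    · intro x
      apply Subtype.ext
      change F.symm (ext0 (ini (F x)) 0) = x
      rw [← (hmem x).1 x.2, ext_ini, F.symm_apply_apply]
    · intro z
      change ini (F (F.symm (ext0 z 0))) = z
      rw [F.apply_symm_apply, ini_ext]
    · intro x
      rfl
  obtain ⟨e, he⟩ := hE
  have hiso : ∀ x y : ↥(perp l), inn MGram (e x) (e y) = inn LGram x y := by
    intro x y
    rw [← hF, inn_LM, he, he, (hmem x).1 x.2, (hmem y).1 y.2]
    ring
  refine ⟨⟨e, hiso⟩, ?_, ?_⟩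
  · intro f hf
    obtain ⟨H, hH, hH'⟩ := ext_iso ((e.symm.trans f).trans e) (by
      intro x y
      simp only [LinearEquiv.trans_apply]
      rw [hiso, hf, ← hiso]
      simp)
    refine ⟨(F.trans H).trans F.symm, ?_, ?_⟩
    · intro x y
      simp only [LinearEquiv.trans_apply]
      rw [← hF, F.apply_symm_apply, F.apply_symm_apply, hH, hF]
    · intro x
      simp only [LinearEquiv.trans_apply]
      rw [LinearEquiv.symm_apply_eq, hH' _ ((hmem x).1 x.2), ← he]
      simp only [LinearEquiv.trans_apply, LinearEquiv.symm_apply_apply]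
      rw [he, ← (hmem (f x)).1 (f x).2, ext_ini]
  · intro l' hl' hhalf'
    exact Rl.trans ⟨F, hF, hFl⟩ (to_l0 l' hl' hhalf').symm
end
end

section
/- Let L be an odd lattice of signature (2,n), let L₀ be its even part (the kernel of the homomorphism L → ℤ/2ℤ, l ↦ (l,l) mod 2), and let x ∈ D_{L₀} be the order-2 element of the discriminant group of L₀ with L = ⟨L₀, x⟩ inside L₀^∨. Let Γ ⊂ O(L₀) be the stabilizer of x for the action of O(L₀) on D_{L₀}. Then O(L) = Γ as subgroups of O(L ⊗ ℚ) = O(L₀ ⊗ ℚ), and consequently the modular varieties F_{L₀}(Γ) and F_L(O(L)) are naturally isomorphic. -/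
/-!
# Odd lattices, even parts, and modular varieties (Ma, Proposition A.2,
after Dolgachev–Kondō)

Let `L` be an odd lattice of signature `(2, n)`, let `L₀` be its even part
(the kernel of `l ↦ (l,l) mod 2`), and let `x ∈ D_{L₀}` be the order-2
element of the discriminant group of `L₀` with `L = ⟨L₀, x⟩` inside `L₀^∨`.
Let `Γ ⊆ O(L₀)` be the stabilizer of `x` for the action of `O(L₀)` on
`D_{L₀}`.  Then `O(L) = Γ` as subgroups of `O(L ⊗ ℚ) = O(L₀ ⊗ ℚ)`, and
consequently the modular varieties `F_{L₀}(Γ)` and `F_L(O(L))` are naturally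
isomorphic.

Modelling conventions:

* The lattice `L` is `ℤ^m` (`m = n + 2`) with a symmetric nondegenerate Gram
  matrix `G`, odd (some vector has odd norm), of signature `(2, n)` (the real
  form is congruent to `diag(1, 1, −1, …, −1)`).
* Inside `L ⊗ ℚ = ℚ^m` : `Lset` is the set of integral vectors and `L0set`
  the set of integral vectors of even norm (the even part `L₀`).  The common
  rational orthogonal group `O(L ⊗ ℚ) = O(L₀ ⊗ ℚ)` consists of the invertible
  rational matrices preserving the form; `O(L)` is the subgroup preserving
  `Lset`, and `Γ` is the subgroup preserving `L0set` and fixing the class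
  `x = [w] ∈ D_{L₀} = L₀^∨/L₀`, where `w` is any vector of `L ∖ L₀`
  (`P` fixes `x` iff `P·w − w ∈ L₀`).  The first claim: these two subgroups
  coincide.
* The period domain `Ω_L = Ω_{L₀} ⊆ ℙ(L ⊗ ℂ)` is modelled by its affine cone
  `{v : (v,v) = 0, (v, v̄) > 0}`; the modular variety `F_L(Γ')` is the
  quotient of `Ω_L` by scalars and by `Γ'`; the second claim: the identity of
  `Ω` induces an isomorphism (a bijection) `F_{L₀}(Γ) ≃ F_L(O(L))`.
-/

noncomputable section

open Matrix

variable {m : ℕ}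

/-- The `ℤ`-bilinear form of the Gram matrix `G`. -/
def innZ (G : Matrix (Fin m) (Fin m) ℤ) (x y : Fin m → ℤ) : ℤ := x ⬝ᵥ G.mulVec y

/-- The `ℚ`-bilinear extension of the form to `L ⊗ ℚ = ℚ^m`. -/
def innQ (G : Matrix (Fin m) (Fin m) ℤ) (x y : Fin m → ℚ) : ℚ :=
  x ⬝ᵥ (G.map (Int.cast : ℤ → ℚ)).mulVec y

/-- The `ℂ`-bilinear extension of the form to `L ⊗ ℂ = ℂ^m`. -/
def innC (G : Matrix (Fin m) (Fin m) ℤ) (x y : Fin m → ℂ) : ℂ :=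
  x ⬝ᵥ (G.map (Int.cast : ℤ → ℂ)).mulVec y

/-- The lattice `L = ℤ^m` inside `L ⊗ ℚ = ℚ^m`. -/
def Lset (m : ℕ) : Set (Fin m → ℚ) := {v | ∀ i, ∃ k : ℤ, v i = (k : ℚ)}

/-- The even part `L₀ = {l ∈ L : (l,l) ∈ 2ℤ}` of the (odd) lattice `L`,
inside `L ⊗ ℚ`. -/
def L0set (G : Matrix (Fin m) (Fin m) ℤ) : Set (Fin m → ℚ) :=
  {v | v ∈ Lset m ∧ ∃ k : ℤ, innQ G v v = 2 * (k : ℚ)}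

/-- Membership in the rational orthogonal group `O(L ⊗ ℚ) = O(L₀ ⊗ ℚ)`. -/
def IsRatIsometry (G : Matrix (Fin m) (Fin m) ℤ) (P : Matrix (Fin m) (Fin m) ℚ) : Prop :=
  IsUnit P.det ∧ Pᵀ * G.map (Int.cast : ℤ → ℚ) * P = G.map (Int.cast : ℤ → ℚ)

/-- The subgroup `O(L) ⊆ O(L ⊗ ℚ)`: rational isometries preserving `L`. -/
def OLat (G : Matrix (Fin m) (Fin m) ℤ) : Set (Matrix (Fin m) (Fin m) ℚ) :=
  {P | IsRatIsometry G P ∧ P.mulVec '' Lset m = Lset m}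

/-- The subgroup `Γ ⊆ O(L₀)`: rational isometries preserving `L₀` and fixing
the class `x = [w] ∈ D_{L₀} = L₀^∨/L₀` (that is, `P·w − w ∈ L₀`). -/
def GammaLat (G : Matrix (Fin m) (Fin m) ℤ) (w : Fin m → ℚ) :
    Set (Matrix (Fin m) (Fin m) ℚ) :=
  {P | IsRatIsometry G P ∧ P.mulVec '' L0set G = L0set G ∧ P.mulVec w - w ∈ L0set G}

/-- The affine cone over the period domain
`Ω_L = {ℂv ∈ ℙ(L ⊗ ℂ) : (v,v) = 0, (v,v̄) > 0}` (`= Ω_{L₀}`). -/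
def OmegaCone (G : Matrix (Fin m) (Fin m) ℤ) : Set (Fin m → ℂ) :=
  {v | innC G v v = 0 ∧ 0 < (innC G v (star v)).re}

/-- The equivalence on `Ω_L` defining the modular variety `F_L(Γ')` for a set
`Γ'` of rational isometries: two period points are identified iff they differ
by a scalar or by an element of `Γ'`. -/
def modRel (G : Matrix (Fin m) (Fin m) ℤ) (Γ' : Set (Matrix (Fin m) (Fin m) ℚ))
    (v w : ↥(OmegaCone G)) : Prop :=
  (∃ c : ℂ, c ≠ 0 ∧ (w : Fin m → ℂ) = c • (v : Fin m → ℂ)) ∨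
  (∃ P ∈ Γ', (w : Fin m → ℂ) = (P.map (Rat.cast : ℚ → ℂ)).mulVec (v : Fin m → ℂ))

theorem aux_sub {u v : Fin m → ℚ} (hu : u ∈ Lset m) (hv : v ∈ Lset m) : u - v ∈ Lset m := by
  intro i
  obtain ⟨a, ha⟩ := hu i
  obtain ⟨b, hb⟩ := hv i
  exact ⟨a - b, by simp [ha, hb]⟩

theorem aux_add {u v : Fin m → ℚ} (hu : u ∈ Lset m) (hv : v ∈ Lset m) : u + v ∈ Lset m := by
  intro i
  obtain ⟨a, ha⟩ := hu i
  obtain ⟨b, hb⟩ := hv i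
  exact ⟨a + b, by simp [ha, hb]⟩

theorem aux_int (G : Matrix (Fin m) (Fin m) ℤ) {u v : Fin m → ℚ} (hu : u ∈ Lset m)
    (hv : v ∈ Lset m) : ∃ k : ℤ, innQ G u v = k := by
  choose a ha using hu
  choose b hb using hv
  refine ⟨innZ G a b, ?_⟩
  simp [innQ, innZ, dotProduct, Matrix.mulVec, ha, hb]

theorem aux_symm {G : Matrix (Fin m) (Fin m) ℤ} (hG : G.IsSymm) (u v : Fin m → ℚ) :
    innQ G u v = innQ G v u := by
  have h : (G.map (Int.cast : ℤ → ℚ))ᵀ = G.map (Int.cast : ℤ → ℚ) := by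
    rw [← Matrix.transpose_map, hG.eq]
  unfold innQ
  rw [Matrix.dotProduct_mulVec, ← Matrix.mulVec_transpose, h, dotProduct_comm]

theorem aux_sub_norm {G : Matrix (Fin m) (Fin m) ℤ} (hG : G.IsSymm) (u v : Fin m → ℚ) :
    innQ G (u - v) (u - v) = innQ G u u + innQ G v v - 2 * innQ G u v := by
  have h := aux_symm hG u v
  unfold innQ at *
  simp only [Matrix.mulVec_sub, sub_dotProduct, dotProduct_sub]
  linarith

theorem aux_iso {G : Matrix (Fin m) (Fin m) ℤ} {P : Matrix (Fin m) (Fin m) ℚ}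
    (hP : IsRatIsometry G P) (u : Fin m → ℚ) :
    innQ G (P.mulVec u) (P.mulVec u) = innQ G u u := by
  unfold innQ
  conv_rhs => rw [← hP.2]
  rw [← Matrix.mulVec_mulVec, ← Matrix.mulVec_mulVec, Matrix.dotProduct_mulVec u,
    ← Matrix.mulVec_transpose, Matrix.transpose_transpose]

theorem aux_odd {G : Matrix (Fin m) (Fin m) ℤ} {u : Fin m → ℚ} (hu : u ∈ Lset m)
    (h : u ∉ L0set G) : ∃ k : ℤ, innQ G u u = 2 * (k : ℚ) + 1 := by
  obtain ⟨a, ha⟩ := aux_int G hu hu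
  rcases Int.even_or_odd' a with ⟨k, hk | hk⟩
  · exact absurd ⟨hu, k, by rw [ha, hk]; push_cast; ring⟩ h
  · exact ⟨k, by rw [ha, hk]; push_cast; ring⟩

theorem aux_diff {G : Matrix (Fin m) (Fin m) ℤ} (hG : G.IsSymm) {u v : Fin m → ℚ}
    (hu : u ∈ Lset m) (hv : v ∈ Lset m) (hu' : u ∉ L0set G) (hv' : v ∉ L0set G) :
    u - v ∈ L0set G := by
  obtain ⟨a, ha⟩ := aux_odd hu hu'
  obtain ⟨b, hb⟩ := aux_odd hv hv'
  obtain ⟨c, hc⟩ := aux_int G hu hv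
  refine ⟨aux_sub hu hv, a + b + 1 - c, ?_⟩
  rw [aux_sub_norm hG, ha, hb, hc]; push_cast; ring

theorem aux_main {G : Matrix (Fin m) (Fin m) ℤ} (hG : G.IsSymm) {w : Fin m → ℚ}
    (hwL : w ∈ Lset m) (hw : w ∉ L0set G) : OLat G = GammaLat G w := by
  ext P
  constructor
  · rintro ⟨hP, hL⟩
    have hmap : ∀ u ∈ Lset m, P.mulVec u ∈ Lset m := fun u hu => hL ▸ Set.mem_image_of_mem _ hu
    refine ⟨hP, ?_, ?_⟩
    · ext v
      constructor
      · rintro ⟨u, ⟨hu, k, hk⟩, rfl⟩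
        exact ⟨hmap u hu, k, by rw [aux_iso hP, hk]⟩
      · rintro ⟨hv, k, hk⟩
        rw [← hL] at hv
        obtain ⟨u, hu, rfl⟩ := hv
        exact ⟨u, ⟨hu, k, by rw [← aux_iso hP, hk]⟩, rfl⟩
    · refine aux_diff hG (hmap w hwL) hwL ?_ hw
      rintro ⟨_, k, hk⟩
      exact hw ⟨hwL, k, by rw [← aux_iso hP, hk]⟩
  · rintro ⟨hP, h0, hx⟩
    have hmap : ∀ u ∈ L0set G, P.mulVec u ∈ L0set G := fun u hu => h0 ▸ Set.mem_image_of_mem _ hu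
    have hPw : P.mulVec w ∈ Lset m := by
      have := aux_add hx.1 hwL
      rwa [sub_add_cancel] at this
    have hPw' : P.mulVec w ∉ L0set G := by
      rintro ⟨_, k, hk⟩
      exact hw ⟨hwL, k, by rw [← aux_iso hP, hk]⟩
    refine ⟨hP, ?_⟩
    ext v
    constructor
    · rintro ⟨u, hu, rfl⟩
      by_cases hu0 : u ∈ L0set G
      · exact (hmap u hu0).1
      · have := aux_add (hmap _ (aux_diff hG hu hwL hu0 hw)).1 hPw
        rwa [← Matrix.mulVec_add, sub_add_cancel] at this
    · intro hv
      by_cases hv0 : v ∈ L0set G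
      · rw [← h0] at hv0
        obtain ⟨u, hu, rfl⟩ := hv0
        exact ⟨u, hu.1, rfl⟩
      · have h := aux_diff hG hv hPw hv0 hPw'
        rw [← h0] at h
        obtain ⟨u, hu, h⟩ := h
        refine ⟨u + w, aux_add hu.1 hwL, ?_⟩
        rw [Matrix.mulVec_add, h, sub_add_cancel]

/-- **Ma, Proposition A.2.**  Let `L = (ℤ^{n+2}, G)` be an odd nondegenerate
lattice of signature `(2, n)`, `L₀` its even part, and `x = [w]` the order-2
element of `D_{L₀}` giving the extension `L₀ ⊆ L` (`w ∈ L ∖ L₀`).  Then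
`O(L)` equals the stabilizer `Γ ⊆ O(L₀)` of `x`, as subgroups of
`O(L₀ ⊗ ℚ)`, and consequently the modular varieties `F_{L₀}(Γ)` and
`F_L(O(L))` are naturally isomorphic. -/
theorem even_part_stabilizer_and_modular_varieties
    (n : ℕ) (G : Matrix (Fin (n + 2)) (Fin (n + 2)) ℤ)
    (hsymm : G.IsSymm) (hnondeg : G.det ≠ 0)
    -- `L` is odd …
    (hodd : ∃ v : Fin (n + 2) → ℤ, Odd (innZ G v v))
    -- … of signature `(2, n)`
    (hsig : ∃ P : Matrix (Fin (n + 2)) (Fin (n + 2)) ℝ, IsUnit P.det ∧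
      Pᵀ * G.map (Int.cast : ℤ → ℝ) * P =
        Matrix.diagonal (fun i : Fin (n + 2) => if (i : ℕ) < 2 then (1 : ℝ) else -1))
    -- `w` represents the order-2 element `x ∈ D_{L₀}` with `L = ⟨L₀, x⟩`:
    -- any element of `L ∖ L₀`
    (w : Fin (n + 2) → ℚ) (hwL : w ∈ Lset (n + 2)) (hwodd : w ∉ L0set G) :
    OLat G = GammaLat G w ∧
    Nonempty (Quot (modRel G (GammaLat G w)) ≃ Quot (modRel G (OLat G))) := by
  have h := aux_main hsymm hwL hwodd
  refine ⟨h, ?_⟩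
  rw [h]
  exact ⟨Equiv.refl _⟩
end
end
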